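/- Fix x ∈ (0, 1) and let q♭(t) = F_q(t, 0, √2), which is increasing on [0, +∞) with limit 1, so that (q♭)⁻¹(x) is well defined. Then for every t > (q♭)⁻¹(x) one has Δ(t, x) = (0, p₀(t, x)) with p₀(t, x) ∈ (0, √2) and t < 𝒯(p₀(t, x))/2; moreover p₀(t, x) → √2 as t → +∞. -/

import Mathlib

open Real Set Filter MeasureTheory
open scoped Topology

/-- The potential `g` from the Hamiltonian `H(x,p) = p²/2 + g(x)`. -/
noncomputable def g (x : ℝ) : ℝ := if |x| ≤ 1 then 1 - (1 - x ^ 2) ^ 4 else 1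

/-- The derivative of `g`. -/
noncomputable def g' (x : ℝ) : ℝ := if |x| ≤ 1 then 8 * x * (1 - x ^ 2) ^ 3 else 0

/-- `(q, p)` is a (global) solution of the Hamiltonian system (HS): `q̇ = p`, `ṗ = -g'(q)`. -/
def IsHSSol (q p : ℝ → ℝ) : Prop :=
  (∀ t : ℝ, HasDerivAt q (p t) t) ∧ (∀ t : ℝ, HasDerivAt p (-(g' (q t))) t)

/-- `F` is the flow of (HS): `F t q₀ p₀ = (q t, p t)` for the solution with data `(q₀, p₀)`. -/
def IsHSFlow (F : ℝ → ℝ → ℝ → ℝ × ℝ) : Prop :=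
  ∀ q₀ p₀ : ℝ,
    IsHSSol (fun t => (F t q₀ p₀).1) (fun t => (F t q₀ p₀).2) ∧ F 0 q₀ p₀ = (q₀, p₀)

/-- The set `([0,∞) × {2}) ∪ ({0} × (0,2])`, codomain of the map `Δ`. -/
def Dset : Set (ℝ × ℝ) := (Ici (0:ℝ) ×ˢ ({2} : Set ℝ)) ∪ ({(0:ℝ)} ×ˢ Ioc (0:ℝ) 2)

/-- `T` is the smallest positive period of `q`. -/
def IsSmallestPeriod (q : ℝ → ℝ) (T : ℝ) : Prop :=
  0 < T ∧ Function.Periodic q T ∧ ∀ T' : ℝ, 0 < T' → Function.Periodic q T' → T ≤ T'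

/-- `T` is the period map `𝒯`, assigning to `p₀ ∈ (0, √2)` the smallest positive period of
the `q`-component of the solution of (HS) with initial datum `(0, p₀)`. -/
def IsPeriodMap (F : ℝ → ℝ → ℝ → ℝ × ℝ) (T : ℝ → ℝ) : Prop :=
  ∀ p₀ ∈ Ioo (0:ℝ) (Real.sqrt 2), IsSmallestPeriod (fun t => (F t 0 p₀).1) (T p₀)

/-- `Δ` associates to `(t,x)` the datum in `Dset` whose orbit stays positive on `(0,t)`
and reaches `x` at time `t`. -/
def IsDeltaMap (F : ℝ → ℝ → ℝ → ℝ × ℝ) (Δ : ℝ → ℝ → ℝ × ℝ) : Prop :=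
  ∀ t x : ℝ, 0 < t → 0 < x →
    Δ t x ∈ Dset ∧ (F t (Δ t x).1 (Δ t x).2).1 = x ∧
      ∀ s ∈ Ioo (0:ℝ) t, 0 < (F s (Δ t x).1 (Δ t x).2).1

/-- The solution `u` of the conservation law built from the flow `F` and the map `Δ`
(extended by `0` at `x = 0`). -/
noncomputable def usol (F : ℝ → ℝ → ℝ → ℝ × ℝ) (Δ : ℝ → ℝ → ℝ × ℝ) (t x : ℝ) : ℝ :=
  if 0 < x then (F t (Δ t x).1 (Δ t x).2).2
  else if x < 0 then -(F t (Δ t (-x)).1 (Δ t (-x)).2).2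
  else 0

theorem aux_k (y : ℝ) : HasDerivAt (fun y : ℝ => (max y 0) ^ 4) (4 * (max y 0) ^ 3) y := by
  refine hasDerivAt_of_hasDerivAt_of_ne' (f := fun y : ℝ => (max y 0) ^ 4)
    (g := fun y => 4 * (max y 0) ^ 3) (x := 0) ?_ (by fun_prop) (by fun_prop) y
  intro y hy
  rcases lt_or_gt_of_ne hy with h | h
  · have h1 : (fun y : ℝ => (max y 0) ^ 4) =ᶠ[𝓝 y] fun _ => 0 := by
      filter_upwards [Iio_mem_nhds h] with z hz
      simp [max_eq_right (le_of_lt (mem_Iio.1 hz))]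
    have h2 := (hasDerivAt_const y (0:ℝ)).congr_of_eventuallyEq h1
    simpa [max_eq_right h.le] using h2
  · have h1 : (fun y : ℝ => (max y 0) ^ 4) =ᶠ[𝓝 y] fun z => z ^ 4 := by
      filter_upwards [Ioi_mem_nhds h] with z hz
      simp [max_eq_left (le_of_lt (mem_Ioi.1 hz))]
    have h2 := (hasDerivAt_pow 4 y).congr_of_eventuallyEq h1
    simpa [max_eq_left h.le] using h2

theorem g_eq (x : ℝ) : g x = 1 - (max (1 - x ^ 2) 0) ^ 4 := by
  unfold g
  split_ifs with h
  · rw [max_eq_left]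
    have := (sq_le_one_iff_abs_le_one x).2 h
    linarith
  · rw [max_eq_right]
    · norm_num
    have := mt (sq_le_one_iff_abs_le_one x).1 h
    linarith

theorem g'_eq (x : ℝ) : g' x = 8 * x * (max (1 - x ^ 2) 0) ^ 3 := by
  unfold g'
  split_ifs with h
  · rw [max_eq_left]
    have := (sq_le_one_iff_abs_le_one x).2 h
    linarith
  · rw [max_eq_right]
    · norm_num
    have := mt (sq_le_one_iff_abs_le_one x).1 h
    linarith

theorem g_deriv (x : ℝ) : HasDerivAt g (g' x) x := by
  have h1 : HasDerivAt (fun x : ℝ => 1 - x ^ 2) (-(2 * x)) x := by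
    simpa using (hasDerivAt_pow 2 x).const_sub 1
  have h2 := ((aux_k (1 - x ^ 2)).comp x h1).const_sub 1
  have h3 : g = fun x => 1 - (max (1 - x ^ 2) 0) ^ 4 := funext g_eq
  rw [h3, g'_eq]
  exact h2.congr_deriv (by ring)

theorem g'_clamp (x : ℝ) : g' x = (fun c : ℝ => 8 * c * (1 - c ^ 2) ^ 3) (max (-1) (min 1 x)) := by
  unfold g'
  split_ifs with h
  · rw [abs_le] at h
    simp [min_eq_right h.2, max_eq_right h.1]
  · rcases lt_abs.1 (not_le.1 h) with h | h
    · rw [min_eq_left h.le]; norm_num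
    · rw [max_eq_left (by rw [min_eq_right] <;> linarith)]; norm_num

theorem g'_lip : ∃ K, LipschitzWith K g' := by
  have h0 : ContDiffOn ℝ 1 (fun c : ℝ => 8 * c * (1 - c ^ 2) ^ 3) (Icc (-1) 1) := by fun_prop
  obtain ⟨K, hK⟩ := h0.exists_lipschitzOnWith (by norm_num) (convex_Icc _ _) isCompact_Icc
  refine ⟨K, ?_⟩
  have h1 : LipschitzWith 1 (fun x : ℝ => max (-1) (min 1 x)) :=
    (LipschitzWith.id.const_min 1).const_max (-1)
  have h2 := hK.comp (h1.lipschitzOnWith (s := univ)) (fun x _ => by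
    refine ⟨le_max_left _ _, max_le (by norm_num) (min_le_left _ _)⟩)
  rw [lipschitzOnWith_univ, mul_one] at h2
  have h3 : g' = (fun c : ℝ => 8 * c * (1 - c ^ 2) ^ 3) ∘ (fun x : ℝ => max (-1) (min 1 x)) :=
    funext g'_clamp
  rw [h3]; exact h2

theorem hs_uniq {q p q2 p2 : ℝ → ℝ} (h1 : IsHSSol q p) (h2 : IsHSSol q2 p2) (t : ℝ)
    (hq : q t = q2 t) (hp : p t = p2 t) : q = q2 ∧ p = p2 := by
  obtain ⟨K, hK⟩ := g'_lip
  have hv : LipschitzWith (max 1 (K * 1)) (fun z : ℝ × ℝ => (z.2, -(g' z.1))) :=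
    LipschitzWith.prod_snd.prodMk (hK.comp LipschitzWith.prod_fst).neg
  have := ODE_solution_unique_univ (v := fun (_ : ℝ) (z : ℝ × ℝ) => (z.2, -(g' z.1)))
    (s := fun _ => univ) (f := fun s => (q s, p s)) (g := fun s => (q2 s, p2 s)) (t₀ := t)
    (fun _ => hv.lipschitzOnWith)
    (fun s => ⟨(h1.1 s).prodMk (h1.2 s), mem_univ _⟩)
    (fun s => ⟨(h2.1 s).prodMk (h2.2 s), mem_univ _⟩) (by simp [hq, hp])
  constructor
  · funext s; exact congrArg Prod.fst (congrFun this s)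
  · funext s; exact congrArg Prod.snd (congrFun this s)

theorem hs_energy {q p : ℝ → ℝ} (h : IsHSSol q p) (s t : ℝ) :
    p s ^ 2 / 2 + g (q s) = p t ^ 2 / 2 + g (q t) := by
  have hd : ∀ u, HasDerivAt (fun u => p u ^ 2 / 2 + g (q u)) 0 u := by
    intro u
    have h1 := (((h.2 u).pow 2).div_const 2).add ((g_deriv (q u)).comp u (h.1 u))
    exact h1.congr_deriv (by norm_num; ring)
  exact is_const_of_deriv_eq_zero (fun u => (hd u).differentiableAt) (fun u => (hd u).deriv) s t

theorem g_le_one (x : ℝ) : g x ≤ 1 := by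
  rw [g_eq]
  have : 0 ≤ (max (1 - x ^ 2) 0) ^ 4 := by positivity
  linarith

theorem pos_of_ne {p : ℝ → ℝ} (hc : Continuous p) (h0 : 0 < p 0) (hne : ∀ t, p t ≠ 0) (t : ℝ) :
    0 < p t := by
  by_contra hcon
  have : (0:ℝ) ∈ range p := mem_range_of_exists_le_of_exists_ge hc ⟨t, not_lt.1 hcon⟩ ⟨0, h0.le⟩
  obtain ⟨s, hs⟩ := this
  exact hne s hs

theorem flat_pos {q p : ℝ → ℝ} (h : IsHSSol q p) (hq : q 0 = 0) (hp : p 0 = √2) (t : ℝ) :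
    0 < p t := by
  refine pos_of_ne (continuous_iff_continuousAt.2 fun u => (h.2 u).continuousAt)
    (by rw [hp]; positivity) ?_ t
  intro s hs
  have he := hs_energy h s 0
  have hg0 : g 0 = 0 := by simp [g]
  rw [hs, hq, hp, hg0, Real.sq_sqrt (by norm_num), g_eq] at he
  have h4 : (max (1 - q s ^ 2) 0) ^ 4 = 0 := by linarith
  have h5 : max (1 - q s ^ 2) 0 = 0 := by simpa using h4
  have h6 : g' (q s) = 0 := by rw [g'_eq, h5]; simp
  have h7 : IsHSSol (fun _ => q s) (fun _ => 0) :=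
    ⟨fun t => hasDerivAt_const _ _, fun t => by simpa [h6] using hasDerivAt_const t (0:ℝ)⟩
  have h8 := (hs_uniq h h7 s rfl hs).2
  have h9 := congrFun h8 0
  rw [hp] at h9
  norm_num at h9

theorem flat_energy {q p : ℝ → ℝ} (h : IsHSSol q p) (hq : q 0 = 0) (hp : p 0 = √2) (t : ℝ) :
    p t ^ 2 = 2 * (max (1 - q t ^ 2) 0) ^ 4 := by
  have he := hs_energy h t 0
  have hg0 : g 0 = 0 := by simp [g]
  rw [hq, hp, hg0, Real.sq_sqrt (by norm_num), g_eq] at he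
  linarith

theorem flat_mono {q p : ℝ → ℝ} (h : IsHSSol q p) (hq : q 0 = 0) (hp : p 0 = √2) :
    StrictMono q :=
  strictMono_of_deriv_pos fun t => by rw [(h.1 t).deriv]; exact flat_pos h hq hp t

theorem flat_lt {q p : ℝ → ℝ} (h : IsHSSol q p) (hq : q 0 = 0) (hp : p 0 = √2) (t : ℝ) :
    q t < 1 := by
  have h1 := flat_energy h hq hp t
  have h2 := flat_pos h hq hp t
  by_contra hc
  have hc := not_lt.1 hc
  rw [max_eq_right (by nlinarith)] at h1
  nlinarith

theorem flat_reach {q p : ℝ → ℝ} (h : IsHSSol q p) (hq : q 0 = 0) (hp : p 0 = √2) (a : ℝ)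
    (h0 : 0 ≤ a) (h1 : a < 1) : ∃ t, 0 ≤ t ∧ a ≤ q t := by
  by_contra! hc
  have hm : 0 < (1 - a ^ 2) ^ 4 := by
    have : 0 < 1 - a ^ 2 := by nlinarith
    positivity
  set m := (1 - a ^ 2) ^ 2 with hmdef
  have hmpos : 0 < m := by
    have : 0 < 1 - a ^ 2 := by nlinarith
    positivity
  have hmono := flat_mono h hq hp
  have hder : ∀ t, 0 ≤ t → m ≤ p t := by
    intro t ht
    have hqt : 0 ≤ q t := by rw [← hq]; exact hmono.monotone ht
    have hqa := hc t ht
    have he := flat_energy h hq hp t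
    have hpp := flat_pos h hq hp t
    have h2 : 1 - a ^ 2 ≤ max (1 - q t ^ 2) 0 := le_max_of_le_left (by nlinarith)
    have h3 : (1 - a ^ 2) ^ 4 ≤ (max (1 - q t ^ 2) 0) ^ 4 :=
      pow_le_pow_left₀ (by nlinarith) h2 4
    have h4 : m ^ 2 = (1 - a ^ 2) ^ 4 := by rw [hmdef]; ring
    refine le_of_sq_le_sq ?_ hpp.le
    linarith
  have hlow : ∀ t, 0 ≤ t → m * t ≤ q t := by
    intro t ht
    have := (convex_Icc (0:ℝ) t).mul_sub_le_image_sub_of_le_deriv (f := q) (C := m)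
      (fun u _ => (h.1 u).continuousAt.continuousWithinAt)
      (fun u _ => (h.1 u).differentiableAt.differentiableWithinAt)
      (fun u hu => by rw [(h.1 u).deriv]; exact hder u (interior_subset hu).1)
      0 ⟨le_rfl, ht⟩ t ⟨ht, le_rfl⟩ ht
    rw [hq] at this; linarith
  have h5 := hlow (1 / m) (by positivity)
  have h6 := hc (1 / m) (by positivity)
  rw [mul_one_div_cancel hmpos.ne'] at h5
  linarith

theorem sol_compare {q p q2 p2 : ℝ → ℝ} (h : IsHSSol q p) (hq : q 0 = 0) (hp : p 0 = √2)
    (h2 : IsHSSol q2 p2) (hq2 : 0 ≤ q2 0) (hp2 : √2 < p2 0) (hE : 1 < p2 0 ^ 2 / 2 + g (q2 0))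
    (t : ℝ) (ht : 0 ≤ t) : q t ≤ q2 t := by
  have hpos : ∀ s, 0 < p2 s := by
    refine pos_of_ne (continuous_iff_continuousAt.2 fun u => (h2.2 u).continuousAt)
      (lt_of_le_of_lt (by positivity) hp2) ?_
    intro s hs
    have he := hs_energy h2 s 0
    have := g_le_one (q2 s)
    rw [hs] at he
    norm_num at he
    linarith
  refine image_le_of_deriv_right_lt_deriv_boundary (f := q) (f' := p) (a := 0) (b := t)
    (B := q2) (B' := p2) (fun u _ => (h.1 u).continuousAt.continuousWithinAt)
    (fun u _ => (h.1 u).hasDerivWithinAt) (by rw [hq]; exact hq2) h2.1 ?_ ⟨ht, le_rfl⟩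
  intro s _ hs
  have he := flat_energy h hq hp s
  have he2 := hs_energy h2 s 0
  rw [← hs, g_eq (q s)] at he2
  refine lt_of_pow_lt_pow_left₀ 2 (hpos s).le ?_
  linarith

theorem sol_odd {q p : ℝ → ℝ} (h : IsHSSol q p) (hq : q 0 = 0) (t : ℝ) : q (-t) = - q t := by
  have hodd : ∀ y, g' (-y) = - g' y := by intro y; simp [g'_eq]
  have h2 : IsHSSol (fun t => - q (-t)) (fun t => p (-t)) := by
    constructor
    · intro t
      have := ((h.1 (-t)).comp t (hasDerivAt_neg t)).neg
      exact this.congr_deriv (by ring)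
    · intro t
      have := ((h.2 (-t)).comp t (hasDerivAt_neg t))
      exact this.congr_deriv (by simp only [hodd]; ring)
  have := congrFun (hs_uniq h h2 0 (by simp [hq]) (by simp)).1 t
  linarith

theorem sol_sturm {q p : ℝ → ℝ} (h : IsHSSol q p) (hq : q 0 = 0) (d : ℝ) (hd : 0 < d)
    (hE : p 0 ^ 2 / 2 ≤ 1 - d) (t : ℝ) (ht : ∀ s ∈ Ioo 0 t, 0 < q s) : t ≤ π / √(8 * d) := by
  by_contra! hc
  set w := √(8 * d) with hw
  have hwpos : 0 < w := by positivity
  have hw2 : w ^ 2 = 8 * d := Real.sq_sqrt (by positivity)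
  have hpw : 0 < π / w := by positivity
  have hg0 : g 0 = 0 := by simp [g]
  have key : ∀ s ∈ Ioo 0 t, 8 * d * q s ≤ g' (q s) := by
    intro s hs
    have hqs := ht s hs
    have he := hs_energy h s 0
    rw [hq, hg0, g_eq (q s)] at he
    rw [g'_eq]
    set M := max (1 - q s ^ 2) 0 with hM
    have hM0 : 0 ≤ M := le_max_right _ _
    have hM1 : M ≤ 1 := max_le (by nlinarith) (by norm_num)
    have h4 : d ≤ M ^ 4 := by nlinarith [sq_nonneg (p s)]
    have h5 : M ^ 4 ≤ M ^ 3 := pow_le_pow_of_le_one hM0 hM1 (by norm_num)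
    nlinarith
  have hW : ∀ s, HasDerivAt (fun s => p s * Real.sin (w * s) - q s * (w * Real.cos (w * s)))
      ((-(g' (q s)) + w ^ 2 * q s) * Real.sin (w * s)) s := by
    intro s
    have hl : HasDerivAt (fun s => w * s) w s := by simpa using (hasDerivAt_id s).const_mul w
    have := ((h.2 s).mul hl.sin).sub ((h.1 s).mul (hl.cos.const_mul w))
    exact this.congr_deriv (by ring)
  have hanti := antitoneOn_of_deriv_nonpos (convex_Icc 0 (π / w))
    (f := fun s => p s * Real.sin (w * s) - q s * (w * Real.cos (w * s)))
    (fun s _ => (hW s).continuousAt.continuousWithinAt)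
    (fun s _ => (hW s).differentiableAt.differentiableWithinAt) (by
      intro s hs
      rw [interior_Icc] at hs
      rw [(hW s).deriv, hw2]
      have h1 := key s ⟨hs.1, hs.2.trans hc⟩
      refine mul_nonpos_of_nonpos_of_nonneg (by linarith) ?_
      refine Real.sin_nonneg_of_nonneg_of_le_pi (mul_nonneg hwpos.le hs.1.le) ?_
      have := (lt_div_iff₀ hwpos).1 hs.2
      linarith)
  have := hanti ⟨le_rfl, hpw.le⟩ ⟨hpw.le, le_rfl⟩ hpw.le
  simp only [mul_div_cancel₀ π hwpos.ne', Real.sin_pi, Real.cos_pi, mul_zero, Real.sin_zero, hq,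
    zero_mul] at this
  have h2 := ht (π / w) ⟨hpw, hc⟩
  nlinarith

/-- For `x ∈ (0,1)`, with `q♭(t) = F_q(t,0,√2)` increasing on `[0,∞)` with limit `1` (so
that `(q♭)⁻¹(x)` is well defined): for every `t > (q♭)⁻¹(x)`, `Δ(t,x) = (0, p₀(t,x))` with
`p₀(t,x) ∈ (0,√2)` and `t < 𝒯(p₀(t,x))/2`; moreover `p₀(t,x) → √2` as `t → +∞`. -/
theorem stmt_12 (F : ℝ → ℝ → ℝ → ℝ × ℝ) (hF : IsHSFlow F)
    (Δ : ℝ → ℝ → ℝ × ℝ) (hΔ : IsDeltaMap F Δ)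
    (T : ℝ → ℝ) (hT : IsPeriodMap F T)
    (x : ℝ) (hx : x ∈ Ioo (0:ℝ) 1) :
    StrictMonoOn (fun t => (F t 0 (Real.sqrt 2)).1) (Ici 0) ∧
    Tendsto (fun t => (F t 0 (Real.sqrt 2)).1) atTop (𝓝 1) ∧
    (∃ tx : ℝ, 0 ≤ tx ∧ (F tx 0 (Real.sqrt 2)).1 = x) ∧
    ∀ tx : ℝ, 0 ≤ tx → (F tx 0 (Real.sqrt 2)).1 = x →
      (∀ t : ℝ, tx < t →
        ∃ p₀ : ℝ, p₀ ∈ Ioo (0:ℝ) (Real.sqrt 2) ∧ Δ t x = (0, p₀) ∧ t < T p₀ / 2) ∧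
      Tendsto (fun t => (Δ t x).2) atTop (𝓝 (Real.sqrt 2)) := by
  have hg0 : g 0 = 0 := by simp [g]
  have hb := (hF 0 (√2)).1
  have hbq : (F 0 0 (√2)).1 = 0 := by rw [(hF 0 (√2)).2]
  have hbp : (F 0 0 (√2)).2 = √2 := by rw [(hF 0 (√2)).2]
  have hmono := flat_mono hb hbq hbp
  refine ⟨hmono.strictMonoOn _, ?_, ?_, ?_⟩
  · rw [tendsto_order]
    constructor
    · intro a ha
      obtain ⟨t, ht0, hta⟩ := flat_reach hb hbq hbp (max a 0) (le_max_right _ _)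
        (max_lt ha one_pos)
      filter_upwards [eventually_gt_atTop t] with s hs
      exact lt_of_le_of_lt ((le_max_left _ _).trans hta) (hmono hs)
    · intro a ha
      exact Eventually.of_forall fun s => (flat_lt hb hbq hbp s).trans ha
  · obtain ⟨t, ht0, hta⟩ := flat_reach hb hbq hbp x hx.1.le hx.2
    have hcont : Continuous (fun t => (F t 0 (√2)).1) :=
      continuous_iff_continuousAt.2 fun u => (hb.1 u).continuousAt
    obtain ⟨s, hs, hsx⟩ := intermediate_value_Icc ht0 hcont.continuousOn
      (show x ∈ Icc _ _ from ⟨by simp only [hbq]; exact hx.1.le, hta⟩)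
    exact ⟨s, hs.1, hsx⟩
  intro tx htx0 htx
  have main : ∀ t : ℝ, tx < t → ∃ p₀ : ℝ, p₀ ∈ Ioo (0:ℝ) (√2) ∧ Δ t x = (0, p₀) := by
    intro t ht
    obtain ⟨hD, hval, hpos⟩ := hΔ t x (htx0.trans_lt ht) hx.1
    have hlt := hmono ht
    simp only [htx] at hlt
    have h2 := (hF (Δ t x).1 (Δ t x).2).1
    have hin := (hF (Δ t x).1 (Δ t x).2).2
    have s2 : √2 ^ 2 = (2:ℝ) := Real.sq_sqrt (by norm_num)
    have s0 : 0 < √(2:ℝ) := by positivity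
    have cmp : 0 ≤ (Δ t x).1 → √2 < (Δ t x).2 → False := by
      intro ha hb'
      have hgn : 0 ≤ g (Δ t x).1 := by
        rw [g_eq]
        have : (max (1 - (Δ t x).1 ^ 2) 0) ^ 4 ≤ 1 :=
          pow_le_one₀ (le_max_right _ _) (max_le (by nlinarith) zero_le_one)
        linarith
      have := sol_compare hb hbq hbp h2 (by simpa only [hin] using ha)
        (by simpa only [hin] using hb') (by simp only [hin]; nlinarith) t (htx0.trans ht.le)
      simp only [hval] at this
      linarith
    rcases hD with hD | hD
    · exfalso
      have e2 : (Δ t x).2 = 2 := hD.2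
      refine cmp hD.1 ?_
      rw [e2]; nlinarith
    · have e1 : (Δ t x).1 = 0 := hD.1
      refine ⟨(Δ t x).2, ⟨hD.2.1, ?_⟩, Prod.ext e1 rfl⟩
      by_contra hge
      rcases (not_lt.1 hge).lt_or_eq with hl | he
      · exact cmp e1.ge hl
      · rw [e1, ← he] at hval
        linarith
  constructor
  · intro t ht
    obtain ⟨p₀, hp, hdel⟩ := main t ht
    refine ⟨p₀, hp, hdel, ?_⟩
    obtain ⟨_, hval, hpos⟩ := hΔ t x (htx0.trans_lt ht) hx.1
    obtain ⟨hT0, hper, _⟩ := hT p₀ hp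
    rw [hdel] at hval hpos
    have hodd := sol_odd (hF 0 p₀).1 (by simp only [(hF 0 p₀).2]) (T p₀ / 2)
    have h1 := hper (-(T p₀ / 2))
    rw [show -(T p₀ / 2) + T p₀ = T p₀ / 2 by ring] at h1
    simp only at h1 hodd hval hpos
    have hz : (F (T p₀ / 2) 0 p₀).1 = 0 := by linarith
    by_contra hc
    rcases (not_lt.1 hc).lt_or_eq with hl | he
    · have := hpos _ ⟨by positivity, hl⟩
      linarith
    · rw [he] at hz
      linarith [hx.1]
  · rw [tendsto_order]
    constructor
    · intro a ha
      have s2 : √2 ^ 2 = (2:ℝ) := Real.sq_sqrt (by norm_num)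
      have hm : max a 0 < √2 := max_lt ha (by positivity)
      have hm0 : 0 ≤ max a 0 := le_max_right _ _
      have hd : 0 < 1 - max a 0 ^ 2 / 2 := by nlinarith
      filter_upwards [eventually_gt_atTop tx,
        eventually_gt_atTop (π / √(8 * (1 - max a 0 ^ 2 / 2)))] with t ht1 ht2
      obtain ⟨p₀, hp, hdel⟩ := main t ht1
      obtain ⟨_, hval, hpos⟩ := hΔ t x (htx0.trans_lt ht1) hx.1
      rw [hdel] at hval hpos ⊢
      by_contra hc
      have hc := not_lt.1 hc
      have hc2 : p₀ ≤ max a 0 := le_trans hc (le_max_left _ _)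
      have := sol_sturm (hF 0 p₀).1 (by simp only [(hF 0 p₀).2]) _ hd
        (by simp only [(hF 0 p₀).2]; nlinarith [hp.1]) t hpos
      linarith
    · intro a ha
      filter_upwards [eventually_gt_atTop tx] with t ht1
      obtain ⟨p₀, hp, hdel⟩ := main t ht1
      rw [hdel]
      exact hp.2.trans ha
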